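/- arXiv:2509.06634 — 2 statements merged into one kernel-verified Lean document; each statement's English description precedes it below -/
import Mathlib

section
/- Every infinite-dimensional C*-algebra A contains an infinite sequence a₁, a₂, a₃, … of nonzero positive elements such that aⱼaₖ = 0 whenever j ≠ k. -/
/-- Order-free form of the conclusion. -/
def GoodSeq (A : Type*) [CStarAlgebra A] : Prop :=
  ∃ x : ℕ → A, (∀ n, x n ≠ 0) ∧ ∀ j k, j ≠ k → x j * star (x k) = 0

/-- The map `u ↦ q u r`. -/
noncomputable def cornerMap {A : Type*} [CStarAlgebra A] (q r : A) : A →ₗ[ℂ] A :=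
  (LinearMap.mulLeft ℂ q).comp (LinearMap.mulRight ℂ r)

lemma cornerMap_apply {A : Type*} [CStarAlgebra A] (q r u : A) :
    cornerMap q r u = q * (u * r) := rfl

lemma goodSeq_of_corner {A : Type*} [CStarAlgebra A] (q r : A) (hq : star q = q)
    (h1 : FiniteDimensional ℂ (LinearMap.range (cornerMap q q)))
    (h2 : ¬ FiniteDimensional ℂ (LinearMap.range (cornerMap q r))) : GoodSeq A := by
  have key := exists_seq_of_forall_finset_exists
    (fun x : A => x ≠ 0 ∧ x ∈ LinearMap.range (cornerMap q r))
    (fun x y => y * star x = 0) (by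
      intro s hs
      by_contra hcon
      push Not at hcon
      apply h2
      have hm : ∀ x : s, ∀ y ∈ LinearMap.range (cornerMap q r),
          LinearMap.mulRight ℂ (star (x : A)) y ∈ LinearMap.range (cornerMap q q) := by
        rintro ⟨x, hx⟩ y ⟨u, rfl⟩
        obtain ⟨v, rfl⟩ := (hs x hx).2
        refine ⟨u * r * star r * star v, ?_⟩
        simp [cornerMap_apply, hq, mul_assoc]
      let ψ : LinearMap.range (cornerMap q r) →ₗ[ℂ] (s → LinearMap.range (cornerMap q q)) :=
        LinearMap.pi (fun x => (LinearMap.mulRight ℂ (star (x : A))).restrict (hm x))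
      refine FiniteDimensional.of_injective ψ ?_
      rw [← LinearMap.ker_eq_bot, LinearMap.ker_eq_bot']
      rintro ⟨y, hy⟩ h0
      by_contra hne
      obtain ⟨x, hx, hxy⟩ := hcon y ⟨fun h => hne (Subtype.ext h), hy⟩
      apply hxy
      have := congrArg Subtype.val (congrFun h0 ⟨x, hx⟩)
      simpa [ψ] using this)
  obtain ⟨f, hf, hr⟩ := key
  refine ⟨f, fun n => (hf n).1, fun j k hjk => ?_⟩
  rcases lt_or_gt_of_ne hjk with h | h
  · have := congrArg star (hr j k h)
    simpa using this
  · exact hr k j h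

lemma goodSeq_of_infinite_spectrum {A : Type*} [CStarAlgebra A] (a : A) (ha : IsSelfAdjoint a)
    (h : (spectrum ℝ a).Infinite) : GoodSeq A := by
  have : Infinite (spectrum ℝ a) := h.to_subtype
  obtain ⟨U, hUi, hUo, hUd⟩ := exists_seq_infinite_isOpen_pairwise_disjoint (spectrum ℝ a)
  have hV : ∀ n, ∃ V : Set ℝ, IsOpen V ∧ Subtype.val ⁻¹' V = U n :=
    fun n => isOpen_induced_iff.mp (hUo n)
  choose V hVo hVU using hV
  have hdis : ∀ j k, j ≠ k → ∀ x ∈ spectrum ℝ a, x ∈ V j → x ∉ V k := by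
    intro j k hjk x hx hj hk
    have hd : Disjoint (U j) (U k) := hUd hjk
    have hd2 : ∀ y, y ∈ U j → y ∉ U k := fun y hy => Set.disjoint_left.mp hd hy
    refine hd2 ⟨x, hx⟩ ?_ ?_
    · rw [← hVU]; exact hj
    · rw [← hVU]; exact hk
  have hne : ∀ n, ∃ x ∈ spectrum ℝ a, x ∈ V n := by
    intro n
    obtain ⟨⟨x, hx⟩, hxU⟩ := (hUi n).nonempty
    rw [← hVU] at hxU
    exact ⟨x, hx, hxU⟩
  let f : ℕ → ℝ → ℝ := fun n x => Metric.infDist x (V n)ᶜ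
  have hfc : ∀ n, Continuous (f n) := fun n => Metric.continuous_infDist_pt _
  have hf0 : ∀ n x, x ∉ V n → f n x = 0 := fun n x hx => Metric.infDist_zero_of_mem hx
  refine ⟨fun n => cfc (f n) a, fun n h0 => ?_, fun j k hjk => ?_⟩
  · obtain ⟨x, hx, hxV⟩ := hne n
    obtain ⟨y, hy, hyV⟩ := hne (n + 1)
    have hcn : ((V n)ᶜ).Nonempty := ⟨y, hdis (n + 1) n (by omega) y hy hyV⟩
    have hpos : 0 < f n x :=
      ((hVo n).isClosed_compl.notMem_iff_infDist_pos hcn).mp (by simpa using hxV)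
    have hmem : f n x ∈ spectrum ℝ (cfc (f n) a) := by
      rw [cfc_map_spectrum (f n) a ha (hfc n).continuousOn]
      exact ⟨x, hx, rfl⟩
    have : Nontrivial A := ⟨⟨0, 1, fun h01 => by
      have : Subsingleton A := subsingleton_of_zero_eq_one h01
      simp [spectrum.of_subsingleton] at hx⟩⟩
    simp only at h0
    rw [h0, spectrum.zero_eq] at hmem
    exact hpos.ne' hmem
  · have hsk : star (cfc (f k) a) = cfc (f k) a :=
      (cfc_predicate (R := ℝ) _ a : IsSelfAdjoint (cfc (f k) a))
    simp only [hsk]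
    rw [← cfc_mul _ _ a (hfc j).continuousOn (hfc k).continuousOn]
    rw [← cfc_const_zero ℝ a]
    apply cfc_congr
    intro x hx
    by_cases hj : x ∈ V j
    · simp [hf0 k x (hdis j k hjk x hx hj)]
    · simp [hf0 j x hj]

lemma split {A : Type*} [CStarAlgebra A] (hng : ¬ GoodSeq A) (p : A) (hp : IsStarProjection p)
    (h : ¬ FiniteDimensional ℂ (LinearMap.range (cornerMap p p))) :
    ∃ q : A, IsStarProjection q ∧ q * p = q ∧ p * q = q ∧ q ≠ 0 ∧ q ≠ p := by
  have hps : star p = p := hp.isSelfAdjoint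
  have hpp : p * p = p := hp.isIdempotentElem
  obtain ⟨b, hb, hbp, hpb, hns⟩ : ∃ b : A, IsSelfAdjoint b ∧ b * p = b ∧ p * b = b ∧
      ∀ c : ℂ, b ≠ c • p := by
    by_contra hcon
    push Not at hcon
    apply h
    have hsa : ∀ b : A, IsSelfAdjoint b → ∃ c : ℂ, p * (b * p) = c • p := by
      intro b hb
      refine hcon (p * (b * p)) ?_ ?_ ?_
      · simp [IsSelfAdjoint, hps, hb.star_eq, mul_assoc]
      · simp [mul_assoc, hpp]
      · simp [← mul_assoc, hpp]
    have hle : LinearMap.range (cornerMap p p) ≤ Submodule.span ℂ {p} := by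
      rintro _ ⟨u, rfl⟩
      obtain ⟨c, hc⟩ := hsa _ (realPart u).2
      obtain ⟨d, hd⟩ := hsa _ (imaginaryPart u).2
      rw [Submodule.mem_span_singleton]
      refine ⟨c + Complex.I * d, ?_⟩
      conv_rhs => rw [← realPart_add_I_smul_imaginaryPart u]
      rw [cornerMap_apply, add_mul, mul_add, smul_mul_assoc, mul_smul_comm, hc, hd, add_smul,
        mul_smul]
    exact Submodule.finiteDimensional_of_le hle
  have hfin : (spectrum ℝ b).Finite := by
    by_contra hi
    exact hng (goodSeq_of_infinite_spectrum b hb hi)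
  let e : ℝ → A := fun l => cfc (fun x : ℝ => if x = l then (1 : ℝ) else 0) b
  have hcont : ∀ f : ℝ → ℝ, ContinuousOn f (spectrum ℝ b) := fun f => hfin.continuousOn f
  have hes : ∀ l, star (e l) = e l := fun l => (cfc_predicate (R := ℝ) _ b : IsSelfAdjoint (e l))
  have hee : ∀ l, e l * e l = e l := by
    intro l
    simp only [e]
    rw [← cfc_mul _ _ b (hcont _) (hcont _)]
    congr 1
    funext x
    split_ifs <;> simp
  have hcomm : ∀ l, p * e l = e l * p := by
    intro l
    have : Commute b p := by rw [Commute, SemiconjBy, hbp, hpb]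
    exact (Commute.cfc_real this _).symm
  have hsum : b = ∑ l ∈ hfin.toFinset, (l : ℂ) • e l := by
    conv_lhs => rw [← cfc_id ℝ b]
    have : ∀ l : ℝ, (l : ℂ) • e l = cfc (fun x : ℝ => l * if x = l then (1 : ℝ) else 0) b := by
      intro l
      rw [cfc_const_mul _ _ b (hcont _)]
      simp [e]
    simp_rw [this]
    rw [← cfc_sum _ _ _ (fun _ _ => hcont _)]
    apply cfc_congr
    intro x hx
    simp [hx]
  by_contra hcon
  push Not at hcon
  have hq : ∀ l, ∃ c : ℂ, e l * p = c • p := by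
    intro l
    by_cases h0 : e l * p = 0
    · exact ⟨0, by simp [h0]⟩
    · refine ⟨1, ?_⟩
      rw [one_smul]
      refine hcon _ ⟨?_, ?_⟩ ?_ ?_ h0
      · rw [IsIdempotentElem, mul_assoc, ← mul_assoc p, hcomm, mul_assoc, hpp, ← mul_assoc, hee]
      · rw [IsSelfAdjoint, star_mul, hps, hes, hcomm]
      · rw [mul_assoc, hpp]
      · rw [← mul_assoc, hcomm, mul_assoc, hpp]
  choose c hc using hq
  apply hns (∑ l ∈ hfin.toFinset, (l : ℂ) * c l)
  refine hbp.symm.trans ((congrArg (· * p) hsum).trans ?_)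
  rw [Finset.sum_mul, Finset.sum_smul]
  refine Finset.sum_congr rfl fun l _ => ?_
  rw [smul_mul_assoc, hc, mul_smul]

lemma step {A : Type*} [CStarAlgebra A] (hng : ¬ GoodSeq A) (p : A) (hp : IsStarProjection p)
    (h : ¬ FiniteDimensional ℂ (LinearMap.range (cornerMap p p))) :
    ∃ q : A, (IsStarProjection q ∧ ¬ FiniteDimensional ℂ (LinearMap.range (cornerMap q q))) ∧
      q * p = q ∧ p * q = q ∧ q ≠ p := by
  obtain ⟨q, hq, hqp, hpq, hq0, hne⟩ := split hng p hp h
  have hps : star p = p := hp.isSelfAdjoint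
  have hpp : p * p = p := hp.isIdempotentElem
  have hqs : star q = q := hq.isSelfAdjoint
  have hqq : q * q = q := hq.isIdempotentElem
  by_cases h1 : FiniteDimensional ℂ (LinearMap.range (cornerMap q q))
  swap
  · exact ⟨q, ⟨hq, h1⟩, hqp, hpq, hne⟩
  have hrs : star (p - q) = p - q := by simp [hps, hqs]
  refine ⟨p - q, ⟨⟨?_, hrs⟩, ?_⟩, ?_, ?_, ?_⟩
  · simp [IsIdempotentElem, mul_sub, sub_mul, hqp, hpq, hpp, hqq]
  · intro h2
    have h3 : FiniteDimensional ℂ (LinearMap.range (cornerMap q (p - q))) := by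
      by_contra h3
      exact hng (goodSeq_of_corner _ _ hqs h1 h3)
    have h4 : FiniteDimensional ℂ (LinearMap.range (cornerMap (p - q) q)) := by
      by_contra h4
      exact hng (goodSeq_of_corner _ _ hrs h2 h4)
    apply h
    have hle : LinearMap.range (cornerMap p p) ≤
        (LinearMap.range (cornerMap q q) ⊔ LinearMap.range (cornerMap q (p - q))) ⊔
        (LinearMap.range (cornerMap (p - q) q) ⊔ LinearMap.range (cornerMap (p - q) (p - q))) := by
      rintro _ ⟨u, rfl⟩
      have : cornerMap p p u = (cornerMap q q u + cornerMap q (p - q) u) +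
          (cornerMap (p - q) q u + cornerMap (p - q) (p - q) u) := by
        simp only [cornerMap_apply]; noncomm_ring
      rw [this]
      exact Submodule.add_mem_sup
        (Submodule.add_mem_sup (LinearMap.mem_range_self _ _) (LinearMap.mem_range_self _ _))
        (Submodule.add_mem_sup (LinearMap.mem_range_self _ _) (LinearMap.mem_range_self _ _))
    exact Submodule.finiteDimensional_of_le hle
  · rw [sub_mul, hpp, hqp]
  · rw [mul_sub, hpp, hpq]
  · simpa using hq0

lemma goodSeq {A : Type*} [CStarAlgebra A] (h : ¬ FiniteDimensional ℂ A) : GoodSeq A := by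
  by_contra hng
  let S := {p : A // IsStarProjection p ∧
    ¬ FiniteDimensional ℂ (LinearMap.range (cornerMap p p))}
  have hstep : ∀ p : S, ∃ q : S, q.1 * p.1 = q.1 ∧ p.1 * q.1 = q.1 ∧ q.1 ≠ p.1 := by
    rintro ⟨p, hp, hi⟩
    obtain ⟨q, hq, hh⟩ := step hng p hp hi
    exact ⟨⟨q, hq⟩, hh⟩
  choose nx hnx using hstep
  have h1 : IsStarProjection (1 : A) ∧
      ¬ FiniteDimensional ℂ (LinearMap.range (cornerMap (1 : A) 1)) := by
    refine ⟨⟨by simp [IsIdempotentElem], by simp [IsSelfAdjoint]⟩, fun hf => h ?_⟩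
    have : LinearMap.range (cornerMap (1 : A) 1) = ⊤ := by
      rw [LinearMap.range_eq_top]
      exact fun u => ⟨u, by simp [cornerMap_apply]⟩
    rw [this] at hf
    exact Module.Finite.equiv (Submodule.topEquiv (R := ℂ) (M := A))
  let P : ℕ → S := fun n => nx^[n] ⟨1, h1⟩
  have hP : ∀ n, P (n + 1) = nx (P n) := fun n => Function.iterate_succ_apply' _ _ _
  have hs : ∀ n, star (P n).1 = (P n).1 := fun n => (P n).2.1.isSelfAdjoint
  have hmul : ∀ j k, j ≤ k → (P j).1 * (P k).1 = (P k).1 := by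
    intro j k hjk
    induction k, hjk using Nat.le_induction with
    | base => exact (P j).2.1.isIdempotentElem
    | succ k hk ih =>
      rw [hP, ← (hnx (P k)).2.1, ← mul_assoc, ih]
  have hlt : ∀ j k, j < k →
      ((P j).1 - (P (j + 1)).1) * ((P k).1 - (P (k + 1)).1) = 0 := by
    intro j k hjk
    rw [sub_mul, mul_sub, mul_sub, hmul j k (by omega), hmul j (k + 1) (by omega),
      hmul (j + 1) k (by omega), hmul (j + 1) (k + 1) (by omega), sub_self]
  refine hng ⟨fun n => (P n).1 - (P (n + 1)).1, fun n h0 => ?_, fun j k hjk => ?_⟩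
  · apply (hnx (P n)).2.2
    rw [← hP]
    exact (sub_eq_zero.mp h0).symm
  · simp only [star_sub, hs]
    rcases lt_or_gt_of_ne hjk with h | h
    · exact hlt j k h
    · have := congrArg star (hlt k j h)
      simpa [hs] using this

/-- Kadison–Ringrose, Exercise 4.6.13: every infinite-dimensional C*-algebra
contains an infinite sequence of pairwise orthogonal nonzero positive elements. -/
theorem stmt5 {A : Type*} [NormedRing A] [StarRing A] [CStarRing A] [CompleteSpace A]
    [NormedAlgebra ℂ A] [StarModule ℂ A] [PartialOrder A] [StarOrderedRing A]
    (h : ¬ FiniteDimensional ℂ A) :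
    ∃ a : ℕ → A, (∀ n, a n ≠ 0 ∧ 0 ≤ a n) ∧ ∀ j k, j ≠ k → a j * a k = 0 := by
  letI : CStarAlgebra A := {}
  obtain ⟨x, hx, ho⟩ := goodSeq h
  refine ⟨fun n => star (x n) * x n, fun n => ⟨?_, star_mul_self_nonneg _⟩, fun j k hjk => ?_⟩
  · simpa [CStarRing.star_mul_self_eq_zero_iff] using hx n
  · have := ho j k hjk
    show star (x j) * x j * (star (x k) * x k) = 0
    rw [mul_assoc, ← mul_assoc (x j), this, zero_mul, mul_zero]
end

section
/- Let A be a C*-algebra, E, H : A → A linear, and F, G : A → A surjective maps continuous at zero. If D₁ : A → A is an (E, F, G, H)-derivation satisfying (G(ab) − G(a)G(b))H(c) = 0 or E(c)(F(ab) − F(a)F(b)) = 0 for all a, b, c ∈ A, then D₁, E, and H are continuous. -/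
set_option linter.unusedSectionVars false

section aux
variable {A : Type*} [CStarAlgebra A]

lemma aux_cont_g {e : ℝ} (he : 0 < e) : Continuous (fun t : ℝ => (max t e)⁻¹) := by
  refine Continuous.inv₀ (by fun_prop) (fun t => ?_)
  have : 0 < max t e := lt_max_of_lt_right he
  exact this.ne'

lemma aux_g_bd {e t : ℝ} (he : 0 < e) (ht : 0 ≤ t) :
    0 ≤ 1 - t * (max t e)⁻¹ ∧ 1 - t * (max t e)⁻¹ ≤ 1 ∧ (1 - t * (max t e)⁻¹) * t ≤ e := by
  rcases le_total t e with h | h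
  · rw [max_eq_right h]
    have h1 : t * e⁻¹ ≤ 1 := by
      rw [← div_eq_mul_inv]; exact (div_le_one he).2 h
    have h2 : 0 ≤ t * e⁻¹ := by positivity
    refine ⟨by linarith, by linarith, ?_⟩
    nlinarith
  · rw [max_eq_left h]
    have h1 : t ≠ 0 := by linarith
    rw [mul_inv_cancel₀ h1]
    norm_num
    exact he.le

variable [PartialOrder A] [StarOrderedRing A]

lemma aux_norm_mul_cfc (x h : A) (hh : IsSelfAdjoint h) (hx : star x * x = h) (f : ℝ → ℝ)
    (hf : Continuous f) : ‖x * cfc f h‖ ^ 2 = ‖cfc (fun t => f t * t * f t) h‖ := by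
  rw [sq, ← CStarRing.norm_star_mul_self, star_mul,
    (cfc_predicate f h : IsSelfAdjoint (cfc f h)).star_eq]
  congr 1
  rw [cfc_mul (fun t => f t * t) f h (by fun_prop) (by fun_prop),
    cfc_mul f (fun t => t) h (by fun_prop) (by fun_prop), cfc_id' ℝ h, ← hx]
  simp only [mul_assoc]

lemma aux_star_mul_mem (L : Ideal A) (hL : IsClosed (L : Set A)) (x : A)
    (hx : star x * x ∈ L) : x ∈ L := by
  have hmem : x ∈ closure (L : Set A) := by
    rw [Metric.mem_closure_iff]
    intro ε hε
    set e : ℝ := ε ^ 2 / 4 with he'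
    have he : 0 < e := by positivity
    have hh : 0 ≤ star x * x := star_mul_self_nonneg x
    have hsa := IsSelfAdjoint.of_nonneg hh
    set h := star x * x with hdef
    have hg := aux_cont_g he
    refine ⟨x * (cfc (fun t : ℝ => (max t e)⁻¹) h * h), L.mul_mem_left _ (L.mul_mem_left _ hx), ?_⟩
    have h1 : x - x * (cfc (fun t : ℝ => (max t e)⁻¹) h * h)
        = x * cfc (fun t : ℝ => 1 - t * (max t e)⁻¹) h := by
      rw [cfc_sub (fun _ => (1:ℝ)) (fun t => t * (max t e)⁻¹) h (by fun_prop)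
        ((continuous_id.mul hg).continuousOn), cfc_const_one ℝ h,
        cfc_mul (fun t => t) _ h (by fun_prop) hg.continuousOn, mul_sub, mul_one,
        (cfc_commute_cfc (fun t : ℝ => t) (fun t : ℝ => (max t e)⁻¹) h).eq, cfc_id' ℝ h]
    rw [dist_eq_norm, h1]
    have h2 := aux_norm_mul_cfc x h hsa rfl (fun t : ℝ => 1 - t * (max t e)⁻¹)
      (continuous_const.sub (continuous_id.mul hg))
    have h3 : ‖cfc (fun t : ℝ => (1 - t * (max t e)⁻¹) * t * (1 - t * (max t e)⁻¹)) h‖ ≤ e := by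
      refine norm_cfc_le he.le (fun t ht => ?_)
      have ht0 : 0 ≤ t := spectrum_nonneg_of_nonneg hh ht
      obtain ⟨b1, b2, b3⟩ := aux_g_bd he ht0
      rw [Real.norm_of_nonneg (by positivity)]
      nlinarith [mul_nonneg b1 ht0]
    have h4 : ‖x * cfc (fun t : ℝ => 1 - t * (max t e)⁻¹) h‖ ^ 2 ≤ (ε / 2) ^ 2 := by
      rw [h2]; refine h3.trans ?_; rw [he']; ring_nf; rfl
    have := abs_le_of_sq_le_sq h4 (by positivity)
    linarith [le_abs_self ‖x * cfc (fun t : ℝ => 1 - t * (max t e)⁻¹) h‖]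
  rwa [hL.closure_eq] at hmem

lemma aux_star_mem (L : Ideal A) [L.IsTwoSided] (hL : IsClosed (L : Set A)) {x : A}
    (hx : x ∈ L) : star x ∈ L := by
  apply aux_star_mul_mem L hL
  rw [star_star]
  exact L.mul_mem_right _ hx

/-- factorization -/
lemma aux_factor (b w : A) (hb : 0 ≤ b) (hw : w * star w ≤ b ^ 4) :
    ∃ v : A, w = b * v ∧ ‖v‖ ≤ ‖b‖ := by
  have hsa := IsSelfAdjoint.of_nonneg hb
  have key : ∀ f : ℝ → ℝ, Continuous f → ∀ C : ℝ, 0 ≤ C → (∀ t, 0 ≤ t → t ≤ ‖b‖ → |f t * t ^ 2| ≤ C) →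
      ‖cfc f b * w‖ ≤ C := by
    intro f hf C hC hb'
    have hfsa : IsSelfAdjoint (cfc f b) := cfc_predicate f b
    have h1 : ‖cfc f b * w‖ ^ 2 = ‖cfc f b * (w * star w) * star (cfc f b)‖ := by
      rw [sq, ← CStarRing.norm_self_mul_star, star_mul]
      simp only [mul_assoc]
    have h2 : cfc f b * b ^ 4 * star (cfc f b) = cfc (fun t => (f t * t ^ 2) ^ 2) b := by
      rw [hfsa.star_eq]
      have : (fun t => (f t * t ^ 2) ^ 2) = fun t => f t * t ^ 4 * f t := by
        funext t; ring
      rw [this, cfc_mul (fun t => f t * t ^ 4) f b (by fun_prop) (by fun_prop),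
        cfc_mul f (fun t => t ^ 4) b (by fun_prop) (by fun_prop), cfc_pow_id b 4]
    have h3 : ‖cfc f b * (w * star w) * star (cfc f b)‖ ≤ ‖cfc f b * b ^ 4 * star (cfc f b)‖ := by
      apply CStarAlgebra.norm_le_norm_of_nonneg_of_le
      · exact star_right_conjugate_nonneg (mul_star_self_nonneg w) _
      · exact star_right_conjugate_le_conjugate hw _
    have h4 : ‖cfc (fun t => (f t * t ^ 2) ^ 2) b‖ ≤ C ^ 2 := by
      refine norm_cfc_le (by positivity) (fun t ht => ?_)
      have ht0 : 0 ≤ t := spectrum_nonneg_of_nonneg hb ht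
      have : Nontrivial A := by
        by_contra hn
        rw [not_nontrivial_iff_subsingleton] at hn
        simp at ht
      have ht1 : t ≤ ‖b‖ := (le_abs_self t).trans (by
        have := spectrum.norm_le_norm_of_mem ht; simpa using this)
      rw [norm_pow, Real.norm_eq_abs]
      exact pow_le_pow_left₀ (abs_nonneg _) (hb' t ht0 ht1) 2
    have h5 : ‖cfc f b * w‖ ^ 2 ≤ C ^ 2 := by
      rw [h1]; refine h3.trans ?_; rw [h2]; exact h4
    exact (le_abs_self _).trans (abs_le_of_sq_le_sq h5 hC)
  let g : ℕ → ℝ → ℝ := fun n t => (max t (1 / ((n : ℝ) + 1)))⁻¹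
  have hpos : ∀ n : ℕ, (0 : ℝ) < 1 / ((n : ℝ) + 1) := fun n => by positivity
  have hg : ∀ n, Continuous (g n) := fun n => aux_cont_g (hpos n)
  let v : ℕ → A := fun n => cfc (g n) b * w
  have hbnd : ∀ n t, 0 ≤ t → 0 ≤ g n t * t ∧ g n t * t ≤ 1 ∧ (1 - g n t * t) * t ≤ 1 / ((n : ℝ) + 1) := by
    intro n t ht
    obtain ⟨b1, b2, b3⟩ := aux_g_bd (hpos n) ht
    simp only [g]
    rw [mul_comm _ t]
    exact ⟨by linarith, by linarith, b3⟩
  have hcau : CauchySeq v := by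
    refine cauchySeq_of_le_tendsto_0 (fun n : ℕ => 1 / ((n : ℝ) + 1)) ?_ tendsto_one_div_add_atTop_nhds_zero_nat
    intro n m N hn hm
    have hbN : ∀ k, N ≤ k → 1 / ((k : ℝ) + 1) ≤ 1 / ((N : ℝ) + 1) := fun k hk => by
      have : (N : ℝ) ≤ k := by exact_mod_cast hk
      gcongr
    rw [dist_eq_norm]
    have : v n - v m = cfc (fun t => g n t - g m t) b * w := by
      simp only [v]
      rw [cfc_sub (g n) (g m) b (hg n).continuousOn (hg m).continuousOn, sub_mul]
    rw [this]
    refine key _ ((hg n).sub (hg m)) _ (hpos N).le (fun t ht _ => ?_)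
    obtain ⟨a1, a2, a3⟩ := hbnd n t ht
    obtain ⟨c1, c2, c3⟩ := hbnd m t ht
    have e1 := hbN n hn
    have e2 := hbN m hm
    have : (g n t - g m t) * t ^ 2 = (1 - g m t * t) * t - (1 - g n t * t) * t := by ring
    change |(g n t - g m t) * t ^ 2| ≤ _
    rw [this, abs_le]
    have p1 : 0 ≤ (1 - g m t * t) * t := mul_nonneg (by linarith) ht
    have p2 : 0 ≤ (1 - g n t * t) * t := mul_nonneg (by linarith) ht
    constructor <;> linarith
  obtain ⟨v0, hv0⟩ := cauchySeq_tendsto_of_complete hcau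
  refine ⟨v0, ?_, ?_⟩
  · have l1 : Filter.Tendsto (fun n => b * v n) Filter.atTop (nhds (b * v0)) := hv0.const_mul b
    have l2 : Filter.Tendsto (fun n => b * v n) Filter.atTop (nhds w) := by
      rw [tendsto_iff_norm_sub_tendsto_zero]
      have hz : Filter.Tendsto (fun n : ℕ => (1 / ((n : ℝ) + 1)) * ‖b‖) Filter.atTop (nhds 0) := by
        simpa using (tendsto_one_div_add_atTop_nhds_zero_nat (𝕜 := ℝ)).mul_const ‖b‖
      refine squeeze_zero (fun _ => norm_nonneg _) (fun n => ?_) hz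
      have : b * v n - w = cfc (fun t => t * g n t - 1) b * w := by
        simp only [v]
        rw [cfc_sub (fun t => t * g n t) (fun _ => 1) b (continuous_id.mul (hg n)).continuousOn (by fun_prop),
          cfc_mul (fun t => t) (g n) b (by fun_prop) (hg n).continuousOn, cfc_id' ℝ b,
          cfc_const_one ℝ b, sub_mul, one_mul, mul_assoc]
      rw [this]
      refine key _ ((continuous_id.mul (hg n)).sub continuous_const) _ (mul_nonneg (hpos n).le (norm_nonneg _)) (fun t ht htb => ?_)
      obtain ⟨a1, a2, a3⟩ := hbnd n t ht
      have : (t * g n t - 1) * t ^ 2 = - ((1 - g n t * t) * t * t) := by ring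
      change |(t * g n t - 1) * t ^ 2| ≤ _
      rw [this, abs_neg, abs_of_nonneg (mul_nonneg (mul_nonneg (by linarith) ht) ht)]
      exact mul_le_mul a3 htb ht (hpos n).le
    exact tendsto_nhds_unique l2 l1
  · refine le_of_tendsto hv0.norm (Filter.Eventually.of_forall fun n => ?_)
    refine key _ (hg n) _ (norm_nonneg _) (fun t ht htb => ?_)
    obtain ⟨a1, a2, a3⟩ := hbnd n t ht
    have : g n t * t ^ 2 = (g n t * t) * t := by ring
    rw [this, abs_of_nonneg (mul_nonneg a1 ht)]
    nlinarith

end aux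

section aux2
variable {A : Type*} [CStarAlgebra A]

lemma aux_ideal (H : A →ₗ[ℂ] A) (G : A → A)
    (h1 : ∀ b, Continuous fun c => H (b * c) - G b * H c)
    (h2 : ∀ c, Continuous fun b => G b * H c) :
    ∃ L : Ideal A, L.IsTwoSided ∧ IsClosed (L : Set A) ∧
      ∀ b, b ∈ L ↔ Continuous fun c => H (b * c) := by
  let L : Ideal A :=
    { carrier := {b | Continuous fun c => H (b * c)}
      add_mem' := by
        intro a b ha hb
        simp only [Set.mem_ofPred_eq, add_mul, map_add] at *
        exact ha.add hb
      zero_mem' := by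
        simp only [Set.mem_ofPred_eq, zero_mul, map_zero]
        exact continuous_const
      smul_mem' := by
        intro a b hb
        simp only [Set.mem_ofPred_eq, smul_eq_mul] at *
        have e : (fun c => H (a * b * c)) =
            fun c => (H (a * (b * c)) - G a * H (b * c)) + G a * H (b * c) := by
          funext c; rw [mul_assoc]; abel
        rw [e]
        exact ((h1 a).comp (continuous_const_mul b)).add (continuous_const.mul hb) }
  have hLm : ∀ b, b ∈ L ↔ Continuous fun c => H (b * c) := fun b => Iff.rfl
  have hLm2 : ∀ b, b ∈ L ↔ Continuous fun c => G b * H c := by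
    intro b
    rw [hLm]
    constructor
    · intro h
      refine (h.sub (h1 b)).congr (fun c => ?_)
      simp
    · intro h
      refine (h.add (h1 b)).congr (fun c => ?_)
      simp
  refine ⟨L, ⟨?_⟩, ?_, hLm⟩
  · intro a b ha
    rw [hLm] at *
    simp only [mul_assoc]
    exact ha.comp (continuous_const_mul b)
  · apply IsSeqClosed.isClosed
    intro u b hu hb
    let T : ℕ → A →L[ℂ] A := fun n =>
      ⟨(LinearMap.mulLeft ℂ (G (u n))).comp H, (hLm2 _).1 (hu n)⟩
    have hT : Filter.Tendsto (fun n x => T n x) Filter.atTop (nhds fun c => G b * H c) := by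
      rw [tendsto_pi_nhds]
      intro c
      exact ((h2 c).tendsto b).comp hb
    exact (hLm2 b).2 (continuousLinearMapOfTendsto T hT).continuous

lemma aux_bdd (T : A →ₗ[ℂ] A) (hT : Continuous T) : ∃ K, 0 ≤ K ∧ ∀ x, ‖T x‖ ≤ K * ‖x‖ := by
  let S : A →L[ℂ] A := ⟨T, hT⟩
  exact ⟨‖S‖, norm_nonneg _, fun x => S.le_opNorm x⟩

lemma aux_unbdd (T : A →ₗ[ℂ] A) (hT : ¬ Continuous T) (ε N : ℝ) (hε : 0 < ε) :
    ∃ y, ‖y‖ ≤ ε ∧ N < ‖T y‖ := by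
  by_contra hcon
  push Not at hcon
  apply hT
  refine AddMonoidHomClass.continuous_of_bound T (N / ε) (fun x => ?_)
  rcases eq_or_ne x 0 with rfl | hx
  · simp
  have hx' : 0 < ‖x‖ := norm_pos_iff.2 hx
  have h := hcon (((ε / ‖x‖ : ℝ) : ℂ) • x) (by
    rw [norm_smul, Complex.norm_real, Real.norm_of_nonneg (by positivity)]
    rw [div_mul_cancel₀ _ hx'.ne'])
  rw [map_smul, norm_smul, Complex.norm_real, Real.norm_of_nonneg (by positivity)] at h
  have : ‖T x‖ = (ε / ‖x‖ * ‖T x‖) * (‖x‖ / ε) := by field_simp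
  rw [this]
  calc _ ≤ N * (‖x‖ / ε) := by gcongr
    _ = _ := by ring

variable [PartialOrder A] [StarOrderedRing A]

lemma aux_H_on_L (H : A →ₗ[ℂ] A) (L : Ideal A) [L.IsTwoSided] (hL : IsClosed (L : Set A))
    (hLm : ∀ b, b ∈ L → Continuous fun c => H (b * c)) :
    ∃ C, 0 ≤ C ∧ ∀ x ∈ L, ‖H x‖ ≤ C * ‖x‖ := by
  by_contra hcon
  push Not at hcon
  have hw : ∀ n : ℕ, ∃ w ∈ L, ‖w‖ ≤ (1 / 2) ^ n ∧ (n : ℝ) < ‖H w‖ := by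
    intro n
    obtain ⟨x, hx, hxn⟩ := hcon (n * 2 ^ n) (by positivity)
    have hx0 : x ≠ 0 := by rintro rfl; simp at hxn
    have hx' : 0 < ‖x‖ := norm_pos_iff.2 hx0
    refine ⟨(((1 / 2) ^ n / ‖x‖ : ℝ) : ℂ) • x, L.smul_of_tower_mem _ hx, ?_, ?_⟩
    · rw [norm_smul, Complex.norm_real, Real.norm_of_nonneg (by positivity),
        div_mul_cancel₀ _ hx'.ne']
    · rw [map_smul, norm_smul, Complex.norm_real, Real.norm_of_nonneg (by positivity)]
      have : (n : ℝ) = (1 / 2) ^ n / ‖x‖ * (n * 2 ^ n * ‖x‖) := by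
        field_simp
        rw [mul_assoc, ← mul_pow]; norm_num
      rw [this]
      gcongr
  choose w hwL hwn hwH using hw
  have hsum : Summable fun n => w n * star (w n) := by
    refine Summable.of_norm_bounded (g := fun n : ℕ => (1 / 2 : ℝ) ^ n) (summable_geometric_two) (fun n => ?_)
    rw [CStarRing.norm_self_mul_star]
    have : (1 / 2 : ℝ) ^ n ≤ 1 := pow_le_one₀ (by norm_num) (by norm_num)
    nlinarith [hwn n, norm_nonneg (w n)]
  set c := ∑' n, w n * star (w n) with hc
  have hle : ∀ n, w n * star (w n) ≤ c := fun n =>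
    hsum.le_tsum n (fun _ _ => mul_star_self_nonneg _)
  have hc0 : 0 ≤ c := (mul_star_self_nonneg (w 0)).trans (hle 0)
  have hcL : c ∈ L := by
    have := hsum.hasSum
    refine hL.mem_of_tendsto this (Filter.Eventually.of_forall fun s => ?_)
    exact L.sum_mem (fun n _ => L.mul_mem_right _ (hwL n))
  have hs : 0 ≤ CFC.sqrt c := CFC.sqrt_nonneg c
  set b := CFC.sqrt (CFC.sqrt c) with hb
  have hb0 : 0 ≤ b := CFC.sqrt_nonneg _
  have hbb : b * b = CFC.sqrt c := CFC.sqrt_mul_sqrt_self _ hs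
  have hss : CFC.sqrt c * CFC.sqrt c = c := CFC.sqrt_mul_sqrt_self _ hc0
  have hb4 : b ^ 4 = c := by
    rw [← hss, ← hbb]; noncomm_ring
  have hsL : CFC.sqrt c ∈ L := by
    apply aux_star_mul_mem L hL
    rw [(IsSelfAdjoint.of_nonneg hs).star_eq, hss]; exact hcL
  have hbL : b ∈ L := by
    apply aux_star_mul_mem L hL
    rw [(IsSelfAdjoint.of_nonneg hb0).star_eq, hbb]; exact hsL
  obtain ⟨K, hK0, hK⟩ := aux_bdd (H.comp (LinearMap.mulLeft ℂ b)) (hLm b hbL)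
  obtain ⟨n, hn⟩ := exists_nat_gt (K * ‖b‖)
  obtain ⟨v, hv, hvn⟩ := aux_factor b (w n) hb0 (by rw [hb4]; exact hle n)
  have h1 := hK v
  simp only [LinearMap.comp_apply, LinearMap.mulLeft_apply] at h1
  rw [← hv] at h1
  have h2 : K * ‖v‖ ≤ K * ‖b‖ := by gcongr
  linarith [hwH n]

lemma aux_glide (H : A →ₗ[ℂ] A) (G : A → A)
    (h1 : ∀ b, Continuous fun c => H (b * c) - G b * H c)
    (L : Ideal A) [L.IsTwoSided] (hL : IsClosed (L : Set A))
    (hLm : ∀ b, b ∈ L ↔ Continuous fun c => H (b * c))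
    (a c : ℕ → A) (hac : ∀ n k, n ≠ k → a n * c k ∈ L) (hn : ∀ n, a n * c n ∉ L) : False := by
  obtain ⟨C, hC0, hC⟩ := aux_H_on_L H L hL (fun b hb => (hLm b).1 hb)
  have hM : ∀ n, ∃ M, 0 ≤ M ∧ ∀ x, ‖H (a n * x) - G (a n) * H x‖ ≤ M * ‖x‖ := fun n =>
    aux_bdd (H.comp (LinearMap.mulLeft ℂ (a n)) - (LinearMap.mulLeft ℂ (G (a n))).comp H) (h1 (a n))
  choose M hM0 hM using hM
  have hy : ∀ n : ℕ, ∃ y, ‖y‖ ≤ (1 / 2) ^ n / (1 + ‖c n‖) ∧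
      n * (‖G (a n)‖ + 1) + 2 * M n + C * (‖a n‖ * 3) < ‖H (a n * c n * y)‖ := fun n =>
    aux_unbdd (H.comp (LinearMap.mulLeft ℂ (a n * c n))) (fun h => hn n ((hLm _).2 h)) _ _
      (by positivity)
  choose y hyn hyH using hy
  have hcy : ∀ n, ‖c n * y n‖ ≤ (1 / 2) ^ n := by
    intro n
    calc ‖c n * y n‖ ≤ ‖c n‖ * ‖y n‖ := norm_mul_le _ _
      _ ≤ (1 + ‖c n‖) * ((1 / 2) ^ n / (1 + ‖c n‖)) := by
        gcongr
        · linarith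
        · exact hyn n
      _ = _ := by field_simp
  have hsum : Summable fun n => c n * y n :=
    Summable.of_norm_bounded summable_geometric_two hcy
  set z := ∑' n, c n * y n with hz
  have hz2 : ‖z‖ ≤ 2 := tsum_of_norm_bounded hasSum_geometric_two hcy
  obtain ⟨n, hn'⟩ := exists_nat_gt ‖H z‖
  have hL' : a n * z - a n * c n * y n ∈ L := by
    have hs1 : HasSum (fun k => a n * (c k * y k)) (a n * z) := hsum.hasSum.mul_left (a n)
    have hs2 := hs1.sub (hasSum_ite_eq n (a n * c n * y n))
    refine hL.mem_of_tendsto hs2 (Filter.Eventually.of_forall fun s => L.sum_mem fun k _ => ?_)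
    by_cases hk : k = n
    · subst hk; simp [mul_assoc]
    · simp only [hk, if_false, sub_zero, ← mul_assoc]
      exact L.mul_mem_right _ (hac n k (Ne.symm hk))
  have e1 := hC _ hL'
  have hcn1 : ‖c n * y n‖ ≤ 1 := (hcy n).trans (pow_le_one₀ (by norm_num) (by norm_num))
  have e2 : ‖a n * z - a n * c n * y n‖ ≤ ‖a n‖ * 3 := by
    rw [mul_assoc, ← mul_sub]
    refine (norm_mul_le _ _).trans ?_
    gcongr
    refine (norm_sub_le _ _).trans ?_
    linarith
  have e3 := hM n z
  have e4 : M n * ‖z‖ ≤ 2 * M n := by nlinarith [hM0 n]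
  have e5 : ‖G (a n) * H z‖ ≤ ‖G (a n)‖ * n :=
    (norm_mul_le _ _).trans (by gcongr)
  have e6 : H (a n * c n * y n) = (H (a n * z) - G (a n) * H z) + G (a n) * H z
      - H (a n * z - a n * c n * y n) := by
    rw [map_sub]; abel
  have e7 := hyH n
  have e8 : ‖H (a n * c n * y n)‖ ≤ ‖H (a n * z) - G (a n) * H z‖ + ‖G (a n) * H z‖
      + ‖H (a n * z - a n * c n * y n)‖ := by
    rw [e6]
    refine (norm_sub_le _ _).trans ?_
    gcongr
    exact norm_add_le _ _
  have e9 : C * ‖a n * z - a n * c n * y n‖ ≤ C * (‖a n‖ * 3) := by gcongr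
  have : (0:ℝ) ≤ n := Nat.cast_nonneg n
  nlinarith

end aux2

section aux3
variable {A : Type*} [CStarAlgebra A]

lemma aux_mul_mem (I : Ideal A) (z : A) (f g h : ℝ → ℝ) (hg : Continuous g) (hh : Continuous h)
    (hf : ∀ t, f t = g t * h t) (hI : cfc h z ∈ I) : cfc f z ∈ I := by
  have : f = fun t => g t * h t := funext hf
  rw [this, cfc_mul g h z hg.continuousOn hh.continuousOn]
  exact I.mul_mem_left _ hI

lemma aux_lim_mem (I : Ideal A) (hI : IsClosed (I : Set A)) (z : A) (f : ℝ → ℝ)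
    (hf : Continuous f)
    (h : ∀ ε > 0, ∃ g : ℝ → ℝ, Continuous g ∧ cfc g z ∈ I ∧ ∀ t, |f t - g t| ≤ ε) :
    cfc f z ∈ I := by
  have hmem : cfc f z ∈ closure (I : Set A) := by
    rw [Metric.mem_closure_iff]
    intro ε hε
    obtain ⟨g, hg, hgI, hb⟩ := h (ε / 2) (by positivity)
    refine ⟨_, hgI, ?_⟩
    rw [dist_eq_norm, ← cfc_sub f g z hf.continuousOn hg.continuousOn]
    have : ‖cfc (fun t => f t - g t) z‖ ≤ ε / 2 :=
      norm_cfc_le (by positivity) (fun t _ => hb t)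
    linarith
  rwa [hI.closure_eq] at hmem

lemma aux_dich (I : Ideal A) (hI : IsClosed (I : Set A)) (z : A) (hz : IsSelfAdjoint z) :
    (∃ l : ℝ, z - algebraMap ℝ A l ∈ I) ∨ ∃ u v : ℝ, u < v ∧
      cfc (fun t : ℝ => max (t - v) 0) z ∉ I ∧ cfc (fun t : ℝ => max (u - t) 0) z ∉ I := by
  by_cases h1 : (1 : A) ∈ I
  · left
    refine ⟨0, ?_⟩
    rw [(Ideal.eq_top_iff_one I).2 h1]; trivial
  by_contra hcon
  push Not at hcon
  obtain ⟨hc1, hc2⟩ := hcon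
  have : Nontrivial A := by
    by_contra hn
    rw [not_nontrivial_iff_subsingleton] at hn
    apply h1
    rw [Subsingleton.elim (1 : A) 0]; exact I.zero_mem
  have hsp : ∀ t ∈ spectrum ℝ z, |t| ≤ ‖z‖ := fun t ht => spectrum.norm_le_norm_of_mem ht
  let T : Set ℝ := {t | cfc (fun s : ℝ => max (s - t) 0) z ∈ I}
  have hTne : T.Nonempty := by
    refine ⟨‖z‖, ?_⟩
    change cfc (fun s : ℝ => max (s - ‖z‖) 0) z ∈ I
    rw [cfc_congr (g := fun _ => (0 : ℝ)), cfc_const_zero]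
    · exact I.zero_mem
    · intro s hs
      have := (abs_le.1 (hsp s hs)).2
      exact max_eq_right (by linarith)
  have hTb : BddBelow T := by
    refine ⟨-‖z‖ - 1, fun t ht => ?_⟩
    by_contra hlt
    push Not at hlt
    apply h1
    have h3 : cfc (fun s : ℝ => (max (s - t) 1)⁻¹ * max (s - t) 0) z ∈ I := by
      refine aux_mul_mem I z _ (fun s : ℝ => (max (s - t) 1)⁻¹) (fun s : ℝ => max (s - t) 0)
        ?_ (by fun_prop) (fun _ => rfl) ht
      exact (aux_cont_g one_pos).comp (continuous_id.sub continuous_const)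
    rw [cfc_congr (g := fun _ => (1 : ℝ)), cfc_const_one ℝ z] at h3
    · exact h3
    · intro s hs
      have := (abs_le.1 (hsp s hs)).1
      have h4 : 1 < s - t := by linarith
      change (max (s - t) 1)⁻¹ * max (s - t) 0 = 1
      rw [max_eq_left h4.le, max_eq_left (by linarith)]
      exact inv_mul_cancel₀ (by linarith)
  set μ := sInf T with hμ
  have hp : cfc (fun s : ℝ => max (s - μ) 0) z ∈ I := by
    refine aux_lim_mem I hI z _ (by fun_prop) (fun ε hε => ?_)
    obtain ⟨t, htT, ht⟩ := exists_lt_of_csInf_lt hTne (show sInf T < μ + ε by linarith)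
    have hμt : μ ≤ t := csInf_le hTb htT
    refine ⟨fun s => max (s - t) 0, by fun_prop, htT, fun s => ?_⟩
    have := abs_max_sub_max_le_abs (s - μ) (s - t) 0
    refine this.trans ?_
    rw [abs_le]; constructor <;> linarith
  have hm : cfc (fun s : ℝ => max (μ - s) 0) z ∈ I := by
    refine aux_lim_mem I hI z _ (by fun_prop) (fun ε hε => ?_)
    refine ⟨fun s => max ((μ - ε) - s) 0, by fun_prop, ?_, fun s => ?_⟩
    · refine hc2 (μ - ε) (μ - ε / 2) (by linarith) (fun hv => ?_)
      have : μ ≤ μ - ε / 2 := csInf_le hTb hv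
      linarith
    · have := abs_max_sub_max_le_abs (μ - s) (μ - ε - s) 0
      refine this.trans ?_
      rw [abs_le]; constructor <;> linarith
  apply hc1 μ
  have := I.sub_mem hp hm
  rw [← cfc_sub _ _ z (by fun_prop) (by fun_prop)] at this
  have e : (fun s : ℝ => max (s - μ) 0 - max (μ - s) 0) = fun s => s - μ := by
    funext s
    rcases le_total s μ with h | h
    · rw [max_eq_right (by linarith), max_eq_left (by linarith)]; ring
    · rw [max_eq_left (by linarith), max_eq_right (by linarith)]; ring
  rw [e, cfc_sub (fun s => s) (fun _ => μ) z (by fun_prop) (by fun_prop), cfc_id' ℝ z,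
    cfc_const μ z] at this
  exact this

/-- ramp -/
noncomputable def auxR (a b t : ℝ) : ℝ := max 0 (min 1 ((t - a) / (b - a)))

lemma auxR_cont (a b : ℝ) : Continuous (auxR a b) := by
  unfold auxR
  exact continuous_const.max (continuous_const.min ((continuous_id.sub continuous_const).div_const _))

lemma auxR_zero {a b t : ℝ} (h : a < b) (ht : t ≤ a) : auxR a b t = 0 := by
  unfold auxR
  refine max_eq_left ((min_le_right _ _).trans ?_)
  exact div_nonpos_of_nonpos_of_nonneg (by linarith) (by linarith)

lemma auxR_one {a b t : ℝ} (h : a < b) (ht : b ≤ t) : auxR a b t = 1 := by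
  unfold auxR
  have : 1 ≤ (t - a) / (b - a) := by
    rw [le_div_iff₀ (by linarith)]; linarith
  rw [min_eq_left this]; norm_num

variable [PartialOrder A] [StarOrderedRing A]

lemma aux_comm (L : Ideal A) [L.IsTwoSided] (hL : IsClosed (L : Set A)) (p z : A)
    (hp : IsSelfAdjoint p) (hz : z * p - p * z ∈ L) (f : ℝ → ℝ) :
    cfc f z * p - p * cfc f z ∈ L := by
  let S : StarSubalgebra ℝ A :=
    { carrier := {y | y * p - p * y ∈ L}
      mul_mem' := by
        intro a b ha hb
        have e : a * b * p - p * (a * b) = a * (b * p - p * b) + (a * p - p * a) * b := by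
          noncomm_ring
        change a * b * p - p * (a * b) ∈ L
        rw [e]
        exact L.add_mem (L.mul_mem_left _ hb) (L.mul_mem_right _ ha)
      add_mem' := by
        intro a b ha hb
        have e : (a + b) * p - p * (a + b) = (a * p - p * a) + (b * p - p * b) := by
          noncomm_ring
        change (a + b) * p - p * (a + b) ∈ L
        rw [e]
        exact L.add_mem ha hb
      algebraMap_mem' := by
        intro r
        change algebraMap ℝ A r * p - p * algebraMap ℝ A r ∈ L
        rw [Algebra.commutes, sub_self]
        exact L.zero_mem
      star_mem' := by
        intro a ha
        change star a * p - p * star a ∈ L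
        have h := L.neg_mem (aux_star_mem L hL ha)
        have e : -star (a * p - p * a) = star a * p - p * star a := by
          rw [star_sub, star_mul, star_mul, hp.star_eq]; abel
        rwa [e] at h }
  have hS : IsClosed (S : Set A) := by
    change IsClosed ((fun y => y * p - p * y) ⁻¹' (L : Set A))
    exact hL.preimage (by fun_prop)
  exact StarAlgebra.elemental.le_of_mem hS (show z ∈ S from hz) (cfc_mem_elemental f z)

lemma aux_split (L : Ideal A) [L.IsTwoSided] (hL : IsClosed (L : Set A))
    (hgl : ∀ a c : ℕ → A, (∀ n k, n ≠ k → a n * c k ∈ L) → (∀ n, a n * c n ∉ L) → False)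
    (p x : A) (hp : IsSelfAdjoint p)
    (hpp : Ideal.Quotient.mk L p * Ideal.Quotient.mk L p = Ideal.Quotient.mk L p)
    (hx : IsSelfAdjoint x) :
    (∃ l : ℝ, Ideal.Quotient.mk L (p * x * p) = Ideal.Quotient.mk L (l • p)) ∨
    ∃ q, IsSelfAdjoint q ∧
      Ideal.Quotient.mk L q * Ideal.Quotient.mk L q = Ideal.Quotient.mk L q ∧
      Ideal.Quotient.mk L q * Ideal.Quotient.mk L p = Ideal.Quotient.mk L q ∧
      Ideal.Quotient.mk L p * Ideal.Quotient.mk L q = Ideal.Quotient.mk L q ∧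
      Ideal.Quotient.mk L q ≠ 0 ∧ Ideal.Quotient.mk L p ≠ Ideal.Quotient.mk L q := by
  set π := Ideal.Quotient.mk L with hπ
  have hπ0 : ∀ a, π a = 0 ↔ a ∈ L := fun a => Ideal.Quotient.eq_zero_iff_mem
  set z := p * x * p with hzdef
  have hz : IsSelfAdjoint z := by
    rw [isSelfAdjoint_iff, hzdef, star_mul, star_mul, hp.star_eq, hx.star_eq, mul_assoc]
  have hzp : π z * π p = π z := by
    rw [hzdef, map_mul, mul_assoc, hpp]
  have hpz : π p * π z = π z := by
    rw [hzdef, map_mul, map_mul, ← mul_assoc, ← mul_assoc, hpp]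
  let I : Ideal A := Submodule.comap (LinearMap.toSpanSingleton A A p) L
  have hIm : ∀ y, y ∈ I ↔ y * p ∈ L := fun y => Iff.rfl
  have hI : IsClosed (I : Set A) := by
    change IsClosed ((fun y => y * p) ⁻¹' (L : Set A))
    exact hL.preimage (by fun_prop)
  rcases aux_dich I hI z hz with ⟨l, hl⟩ | ⟨u, v, huv, hv, hu⟩
  · left
    refine ⟨l, ?_⟩
    rw [hIm, ← hπ0, sub_mul, map_sub, map_mul, hzp, sub_eq_zero, ← Algebra.smul_def] at hl
    exact hl
  right
  let w : ℕ → ℝ := fun k => u + (v - u) / ((k : ℝ) + 1)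
  have hwlt : ∀ k, w (k + 1) < w k := by
    intro k
    simp only [w]
    have : 0 < v - u := by linarith
    gcongr
    simp
  have hanti : Antitone w := antitone_nat_of_succ_le fun k => (hwlt k).le
  have hw0 : ∀ k, w k ≤ v := fun k => (hanti (Nat.zero_le k)).trans (by simp [w])
  have hwu : ∀ k, u ≤ w k := fun k => by
    have : 0 ≤ (v - u) / ((k : ℝ) + 1) := div_nonneg (by linarith) (by positivity)
    simp only [w]; linarith
  let r : ℕ → ℝ → ℝ := fun k => auxR (w (k + 1)) (w k)
  have hr : ∀ k, Continuous (r k) := fun k => auxR_cont _ _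
  let g : ℕ → ℝ → ℝ := fun k t => r k t * r k t - r k t
  have hg : ∀ k, Continuous (g k) := fun k => ((hr k).mul (hr k)).sub (hr k)
  have hgg' : ∀ n k, n < k → ∀ t, g n t * g k t = 0 := by
    intro n k hnk t
    rcases le_total t (w (n + 1)) with h | h
    · have : r n t = 0 := auxR_zero (hwlt n) h
      simp [g, this]
    · have : r k t = 1 := auxR_one (hwlt k) ((hanti (Nat.succ_le_of_lt hnk)).trans h)
      simp [g, this]
  have hgg : ∀ n k, n ≠ k → ∀ t, g n t * g k t = 0 := by
    intro n k hnk t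
    rcases lt_or_gt_of_ne hnk with h | h
    · exact hgg' n k h t
    · rw [mul_comm]; exact hgg' k n h t
  have hex : ∃ k, cfc (g k) z ∈ I := by
    by_contra hno
    push Not at hno
    refine hgl (fun n => cfc (g n) z) (fun n => cfc (g n) z * p) ?_ ?_
    · intro n k hnk
      have : cfc (g n) z * (cfc (g k) z * p) = 0 := by
        rw [← mul_assoc, ← cfc_mul (g n) (g k) z (hg n).continuousOn (hg k).continuousOn]
        have e : (fun t => g n t * g k t) = fun _ => 0 := funext (hgg n k hnk)
        rw [e, cfc_const_zero, zero_mul]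
      rw [this]; exact L.zero_mem
    · intro n hn
      apply hno n
      rw [hIm]
      apply aux_star_mul_mem L hL
      rw [star_mul, hp.star_eq, (cfc_predicate (g n) z : IsSelfAdjoint (cfc (g n) z)).star_eq,
        mul_assoc]
      exact L.mul_mem_left _ hn
  obtain ⟨k, hk⟩ := hex
  set R := cfc (r k) z with hR
  have hRsa : IsSelfAdjoint R := cfc_predicate _ z
  have hRR : π R * π R * π p = π R * π p := by
    rw [hIm, ← hπ0] at hk
    have e : cfc (g k) z = R * R - R := by
      simp only [g]
      rw [cfc_sub (fun t => r k t * r k t) (r k) z ((hr k).mul (hr k)).continuousOn (hr k).continuousOn,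
        cfc_mul (r k) (r k) z (hr k).continuousOn (hr k).continuousOn]
    rw [e, map_mul, map_sub, map_mul, sub_mul, sub_eq_zero] at hk
    exact hk
  have hRI : R ∉ I := by
    intro h
    apply hv
    refine aux_mul_mem I z _ (fun t : ℝ => max (t - v) 0) (r k) (by fun_prop) (hr k) (fun t => ?_) h
    rcases le_total t v with h | h
    · rw [max_eq_right (by linarith)]; simp
    · have : r k t = 1 := auxR_one (hwlt k) ((hw0 k).trans h)
      rw [this, mul_one]
  have hRI' : 1 - R ∉ I := by
    intro h
    apply hu
    have e : 1 - R = cfc (fun t => 1 - r k t) z := by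
      rw [cfc_sub (fun _ => 1) (r k) z (by fun_prop) (hr k).continuousOn, cfc_const_one ℝ z]
    rw [e] at h
    refine aux_mul_mem I z _ (fun t : ℝ => max (u - t) 0) (fun t => 1 - r k t) (by fun_prop)
      (continuous_const.sub (hr k)) (fun t => ?_) h
    rcases le_total u t with h | h
    · rw [max_eq_right (by linarith)]; simp
    · have : r k t = 0 := auxR_zero (hwlt k) (h.trans (hwu _))
      simp [this]
  have hcomm : π R * π p = π p * π R := by
    have := aux_comm L hL p z hp (by rw [← hπ0, map_sub, map_mul π z p, map_mul π p z, hzp, hpz, sub_self]) (r k)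
    rw [← hπ0, map_sub, map_mul, map_mul, sub_eq_zero] at this
    exact this
  have hq : π (p * R * p) = π R * π p := by
    rw [map_mul, map_mul, ← hcomm, mul_assoc, hpp]
  refine ⟨p * R * p, ?_, ?_, ?_, ?_, ?_, ?_⟩
  · rw [isSelfAdjoint_iff, star_mul, star_mul, hp.star_eq, hRsa.star_eq, mul_assoc]
  · rw [hq]
    calc π R * π p * (π R * π p) = π R * (π p * π R) * π p := by noncomm_ring
      _ = π R * π R * (π p * π p) := by rw [← hcomm]; noncomm_ring
      _ = _ := by rw [hpp, hRR]
  · rw [hq, mul_assoc, hpp]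
  · rw [hq, hcomm, ← mul_assoc, hpp]
  · rw [hq, ← map_mul, Ne, hπ0]; exact hRI
  · rw [hq]
    intro h
    apply hRI'
    rw [hIm, ← hπ0, sub_mul, one_mul, map_sub, map_mul, ← h, sub_self]

end aux3

section aux4
variable {A : Type*} [CStarAlgebra A] [PartialOrder A] [StarOrderedRing A]

/-- strict order on self-adjoint idempotents modulo an ideal -/
def auxLt (L : Ideal A) [L.IsTwoSided] (q p : A) : Prop :=
  Ideal.Quotient.mk L p * Ideal.Quotient.mk L p = Ideal.Quotient.mk L p ∧
  Ideal.Quotient.mk L q * Ideal.Quotient.mk L p = Ideal.Quotient.mk L q ∧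
  Ideal.Quotient.mk L p * Ideal.Quotient.mk L q = Ideal.Quotient.mk L q ∧
  Ideal.Quotient.mk L p ≠ Ideal.Quotient.mk L q

/-- minimal self-adjoint idempotents modulo an ideal -/
def auxMin (L : Ideal A) [L.IsTwoSided] (p : A) : Prop :=
  IsSelfAdjoint p ∧ Ideal.Quotient.mk L p * Ideal.Quotient.mk L p = Ideal.Quotient.mk L p ∧
  Ideal.Quotient.mk L p ≠ 0 ∧
  ∀ x, ∃ l : ℂ, Ideal.Quotient.mk L (p * x * p) = l • Ideal.Quotient.mk L p

lemma aux_wf (L : Ideal A) [L.IsTwoSided]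
    (hgl : ∀ a c : ℕ → A, (∀ n k, n ≠ k → a n * c k ∈ L) → (∀ n, a n * c n ∉ L) → False) :
    WellFounded (auxLt L) := by
  rw [wellFounded_iff_isEmpty_descending_chain]
  refine ⟨fun ⟨f, hf⟩ => ?_⟩
  set π := Ideal.Quotient.mk L with hπ
  have hπ0 : ∀ a, π a = 0 ↔ a ∈ L := fun a => Ideal.Quotient.eq_zero_iff_mem
  have hid : ∀ n, π (f n) * π (f n) = π (f n) := fun n => (hf n).1
  have hle : ∀ n m, n ≤ m → π (f m) * π (f n) = π (f m) ∧ π (f n) * π (f m) = π (f m) := by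
    intro n m hnm
    induction m, hnm using Nat.le_induction with
    | base => exact ⟨hid n, hid n⟩
    | succ m hm ih =>
      obtain ⟨_, h2, h3, _⟩ := hf m
      refine ⟨?_, ?_⟩
      · calc π (f (m + 1)) * π (f n) = π (f (m + 1)) * π (f m) * π (f n) := by rw [h2]
          _ = π (f (m + 1)) * (π (f m) * π (f n)) := mul_assoc _ _ _
          _ = _ := by rw [ih.1, h2]
      · calc π (f n) * π (f (m + 1)) = π (f n) * (π (f m) * π (f (m + 1))) := by rw [h3]
          _ = (π (f n) * π (f m)) * π (f (m + 1)) := (mul_assoc _ _ _).symm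
          _ = _ := by rw [ih.2, h3]
  refine hgl (fun n => f n - f (n + 1)) (fun n => f n - f (n + 1)) ?_ ?_
  · intro n k hnk
    rw [← hπ0, map_mul, map_sub, map_sub, sub_mul, mul_sub, mul_sub]
    rcases lt_or_gt_of_ne hnk with h | h
    · rw [(hle n k h.le).2, (hle n (k + 1) (by omega)).2, (hle (n + 1) k h).2,
        (hle (n + 1) (k + 1) (by omega)).2, sub_self]
    · rw [(hle k n h.le).1, (hle k (n + 1) (by omega)).1, (hle (k + 1) n h).1,
        (hle (k + 1) (n + 1) (by omega)).1, sub_self, sub_self, sub_self]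
  · intro n
    rw [← hπ0, map_mul, map_sub, sub_mul, mul_sub, mul_sub, hid, hid,
      (hle n (n + 1) (by omega)).1, (hle n (n + 1) (by omega)).2, sub_self, sub_zero, sub_eq_zero]
    exact (hf n).2.2.2

lemma aux_exists_min (L : Ideal A) [L.IsTwoSided] (hL : IsClosed (L : Set A))
    (hgl : ∀ a c : ℕ → A, (∀ n k, n ≠ k → a n * c k ∈ L) → (∀ n, a n * c n ∉ L) → False)
    (p : A) (hp : IsSelfAdjoint p)
    (hpp : Ideal.Quotient.mk L p * Ideal.Quotient.mk L p = Ideal.Quotient.mk L p)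
    (hp0 : Ideal.Quotient.mk L p ≠ 0) :
    ∃ q, auxMin L q ∧ Ideal.Quotient.mk L q * Ideal.Quotient.mk L p = Ideal.Quotient.mk L q ∧
      Ideal.Quotient.mk L p * Ideal.Quotient.mk L q = Ideal.Quotient.mk L q := by
  set π := Ideal.Quotient.mk L with hπ
  obtain ⟨q, ⟨hq, hqq, hq0, hqp, hpq⟩, hmin⟩ := (aux_wf L hgl).has_min
    {q | IsSelfAdjoint q ∧ π q * π q = π q ∧ π q ≠ 0 ∧ π q * π p = π q ∧ π p * π q = π q}
    ⟨p, hp, hpp, hp0, hpp, hpp⟩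
  have hsm : ∀ (l : ℂ) (a : A), π (l • a) = l • π a := fun l a => rfl
  have hreal : ∀ x, IsSelfAdjoint x → ∃ l : ℝ, π (q * x * q) = (l : ℂ) • π q := by
    intro x hx
    rcases aux_split L hL hgl q x hq hqq hx with ⟨l, hl⟩ | ⟨r, hr, hrr, hrq, hqr, hr0, hne⟩
    · refine ⟨l, ?_⟩
      rw [← hsm, Complex.coe_smul]; exact hl
    · exfalso
      refine hmin r ⟨hr, hrr, hr0, ?_, ?_⟩ ⟨hqq, hrq, hqr, hne⟩
      · rw [← hrq, mul_assoc]
        change π r * (π q * π p) = _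
        rw [hqp]
      · rw [← hqr, ← mul_assoc]
        change (π p * π q) * π r = _
        rw [hpq]
  refine ⟨q, ⟨hq, hqq, hq0, fun x => ?_⟩, hqp, hpq⟩
  obtain ⟨l, hl⟩ := hreal (realPart x) (realPart x).2
  obtain ⟨m, hm⟩ := hreal (imaginaryPart x) (imaginaryPart x).2
  refine ⟨l + Complex.I * m, ?_⟩
  have e : q * x * q = q * (realPart x : A) * q + Complex.I • (q * (imaginaryPart x : A) * q) := by
    conv_lhs => rw [← realPart_add_I_smul_imaginaryPart x]
    rw [mul_add, add_mul, mul_smul_comm, smul_mul_assoc]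
  change π (q * x * q) = _
  rw [e, map_add, hsm, hl, hm, add_smul, smul_smul]

lemma aux_exists_sum (L : Ideal A) [L.IsTwoSided] (hL : IsClosed (L : Set A))
    (hgl : ∀ a c : ℕ → A, (∀ n k, n ≠ k → a n * c k ∈ L) → (∀ n, a n * c n ∉ L) → False) :
    ∃ (n : ℕ) (f : Fin n → A), (∀ i, auxMin L (f i)) ∧ ∑ i, Ideal.Quotient.mk L (f i) = 1 := by
  set π := Ideal.Quotient.mk L with hπ
  obtain ⟨e, ⟨he, hee, n, f, hf, hsum⟩, hmin⟩ := (aux_wf L hgl).has_min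
    {e | IsSelfAdjoint e ∧ π e * π e = π e ∧ ∃ (n : ℕ) (f : Fin n → A), (∀ i, auxMin L (f i)) ∧
      π e + ∑ i, π (f i) = 1}
    ⟨1, IsSelfAdjoint.one A, by simp, 0, Fin.elim0, fun i => i.elim0, by simp⟩
  by_cases he0 : π e = 0
  · refine ⟨n, f, hf, ?_⟩
    rw [he0, zero_add] at hsum
    exact hsum
  exfalso
  obtain ⟨q, hq, hqe, heq⟩ := aux_exists_min L hL hgl e he hee he0
  change π q * π e = π q at hqe
  change π e * π q = π q at heq
  have hqq : π q * π q = π q := hq.2.1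
  refine hmin (e - q) ⟨he.sub hq.1, ?_, n + 1, Fin.cons q f, ?_, ?_⟩ ⟨hee, ?_, ?_, ?_⟩
  · rw [map_sub, sub_mul, mul_sub, mul_sub, hee, hqe, heq, hqq]; abel
  · intro i
    refine Fin.cases ?_ (fun j => ?_) i
    · simpa using hq
    · simpa using hf j
  · rw [Fin.sum_univ_succ]
    simp only [Fin.cons_zero, Fin.cons_succ]
    rw [map_sub, ← hsum]; abel
  · change π (e - q) * π e = π (e - q)
    rw [map_sub, sub_mul, hee, hqe]
  · change π e * π (e - q) = π (e - q)
    rw [map_sub, mul_sub, hee, heq]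
  · change π e ≠ π (e - q)
    rw [map_sub]
    intro h
    apply hq.2.2.1
    change π q = 0
    have : π q = π e - (π e - π q) := by abel
    rw [this, ← h, sub_self]

lemma aux_dim_one (L : Ideal A) [L.IsTwoSided] (hL : IsClosed (L : Set A)) (p q : A)
    (hp : auxMin L p) (hq : auxMin L q) :
    ∃ y : A ⧸ L, ∀ x, ∃ m : ℂ, Ideal.Quotient.mk L (q * x * p) = m • y := by
  obtain ⟨hps, hpp, hp0, hp⟩ := hp
  obtain ⟨hqs, hqq, hq0, hq⟩ := hq
  set π := Ideal.Quotient.mk L with hπ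
  have hπ0 : ∀ a, π a = 0 ↔ a ∈ L := fun a => Ideal.Quotient.eq_zero_iff_mem
  by_cases h : ∀ x, π (q * x * p) = 0
  · exact ⟨0, fun x => ⟨0, by rw [h]; simp⟩⟩
  push Not at h
  obtain ⟨x, hx⟩ := h
  refine ⟨π (q * x * p), fun w => ?_⟩
  obtain ⟨l, hl⟩ := hp (star x * q * (q * x))
  obtain ⟨m, hm⟩ := hq (w * p * p * star x)
  have hl0 : l ≠ 0 := by
    rintro rfl
    rw [zero_smul, hπ0] at hl
    apply hx
    rw [hπ0]
    apply aux_star_mul_mem L hL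
    rw [star_mul, star_mul, hps.star_eq, hqs.star_eq]
    convert hl using 1
    noncomm_ring
  refine ⟨l⁻¹ * m, ?_⟩
  have e1 : l • π (q * w * p) = m • π (q * x * p) := by
    calc l • π (q * w * p) = π (q * w) * (l • π p) := by rw [map_mul, mul_smul_comm]
      _ = π (q * w) * π p * (l • π p) := by
          rw [mul_assoc, mul_smul_comm l (π p) (π p), hpp]
      _ = π (q * w) * π p * π (p * (star x * q * (q * x)) * p) := by rw [hl]
      _ = π (q * (w * p * p * star x) * q) * π (q * x * p) := by
          rw [← map_mul, ← map_mul, ← map_mul]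
          congr 1
          noncomm_ring
      _ = m • (π q * (π (q * x * p))) := by rw [hm, smul_mul_assoc]
      _ = _ := by
          congr 1
          rw [map_mul, map_mul, ← mul_assoc, ← mul_assoc, hqq]
  rw [mul_smul, ← e1, smul_smul, inv_mul_cancel₀ hl0, one_smul]

lemma aux_fd (L : Ideal A) [L.IsTwoSided] (hL : IsClosed (L : Set A))
    (hgl : ∀ a c : ℕ → A, (∀ n k, n ≠ k → a n * c k ∈ L) → (∀ n, a n * c n ∉ L) → False) :
    FiniteDimensional ℂ (A ⧸ L) := by
  obtain ⟨n, f, hf, hsum⟩ := aux_exists_sum L hL hgl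
  choose y hy using fun (ij : Fin n × Fin n) => aux_dim_one L hL (f ij.2) (f ij.1) (hf _) (hf _)
  have hspan : Submodule.span ℂ (Set.range y) = ⊤ := by
    rw [eq_top_iff]
    rintro b -
    obtain ⟨x, rfl⟩ := Ideal.Quotient.mk_surjective b
    have e : Ideal.Quotient.mk L x = ∑ i, ∑ j, Ideal.Quotient.mk L (f i * x * f j) := by
      calc Ideal.Quotient.mk L x = 1 * Ideal.Quotient.mk L x * 1 := by simp
        _ = _ := by
          rw [← hsum, Finset.sum_mul, Finset.sum_mul]
          refine Finset.sum_congr rfl (fun i _ => ?_)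
          rw [Finset.mul_sum]
          refine Finset.sum_congr rfl (fun j _ => ?_)
          rw [map_mul, map_mul]
    rw [e]
    refine Submodule.sum_mem _ (fun i _ => Submodule.sum_mem _ (fun j _ => ?_))
    obtain ⟨m, hm⟩ := hy (i, j) x
    rw [hm]
    exact Submodule.smul_mem _ _ (Submodule.subset_span ⟨_, rfl⟩)
  exact Module.Finite.of_fg_top ((Submodule.fg_def).2 ⟨_, Set.finite_range y, hspan⟩)

lemma aux_core (H : A →ₗ[ℂ] A) (G : A → A)
    (h1 : ∀ b, Continuous fun c => H (b * c) - G b * H c)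
    (h2 : ∀ c, Continuous fun b => G b * H c) : Continuous H := by
  obtain ⟨L, hts, hL, hLm⟩ := aux_ideal H G h1 h2
  have hfd := aux_fd L hL (aux_glide H G h1 L hL hLm)
  obtain ⟨C, hC0, hC⟩ := aux_H_on_L H L hL (fun b hb => (hLm b).1 hb)
  let P : Submodule ℂ A := L.restrictScalars ℂ
  have hP : IsClosed (P : Set A) := hL
  have hfd' : FiniteDimensional ℂ (A ⧸ P) :=
    Module.Finite.equiv (Submodule.Quotient.restrictScalarsEquiv ℂ L).symm
  obtain ⟨f, hf⟩ := Submodule.ClosedComplemented.of_finiteDimensional_quotient hP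
  let T1 : P →ₗ[ℂ] A := H.comp P.subtype
  have hT1 : Continuous T1 :=
    AddMonoidHomClass.continuous_of_bound T1 C (fun x => hC x.1 x.2)
  let T2 : A →ₗ[ℂ] A := H.comp (LinearMap.id - P.subtype.comp f.toLinearMap)
  have hker : P ≤ LinearMap.ker T2 := by
    intro x hx
    have := hf ⟨x, hx⟩
    simp only [LinearMap.mem_ker, T2, LinearMap.comp_apply, LinearMap.sub_apply,
      LinearMap.id_apply]
    change H (x - (f x : A)) = 0
    rw [this]
    simp
  have hT2 : Continuous T2 := by
    have : T3Space (A ⧸ P) := P.t3_quotient_of_isClosed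
    have h := (P.liftQ T2 hker).continuous_of_finiteDimensional
    exact h.comp continuous_quot_mk
  refine ((hT1.comp f.continuous).add hT2).congr (fun x => ?_)
  change H (f x : A) + H (x - (f x : A)) = H x
  rw [← map_add]; congr 1; abel

end aux4

section aux5
variable {A : Type*} [CStarAlgebra A]

lemma aux_lin_cont (T : A → A) (hadd : ∀ x y, T (x + y) = T x + T y)
    (h0 : Filter.Tendsto T (nhds 0) (nhds 0)) : Continuous T := by
  let S : A →+ A := AddMonoidHom.mk' T hadd
  refine continuous_of_continuousAt_zero S ?_
  change Filter.Tendsto T (nhds 0) (nhds (S 0))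
  rwa [map_zero]

lemma aux_case (D₁ E H F G : A → A)
    (hD₁ : IsLinearMap ℂ D₁) (hE : IsLinearMap ℂ E) (hH : IsLinearMap ℂ H)
    (hFsurj : Function.Surjective F) (hGsurj : Function.Surjective G)
    (hF : ContinuousAt F 0) (hG : ContinuousAt G 0)
    (hid : ∀ a b : A, D₁ (a * b) = E a * F b + G a * H b)
    (hyp : ∀ a b c : A, (G (a * b) - G a * G b) * H c = 0) :
    Continuous D₁ ∧ Continuous E ∧ Continuous H := by
  letI : PartialOrder A := CStarAlgebra.spectralOrder A
  haveI : StarOrderedRing A := CStarAlgebra.spectralOrderedRing A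
  have hG0 : ∀ b, G 0 * H b = 0 := fun b => by
    have := hid 0 b
    rw [zero_mul, hD₁.map_zero, hE.map_zero, zero_mul, zero_add] at this
    exact this.symm
  have hF0 : ∀ a, E a * F 0 = 0 := fun a => by
    have := hid a 0
    rw [mul_zero, hD₁.map_zero, hH.map_zero, mul_zero, add_zero] at this
    exact this.symm
  have hGlim : ∀ c, Filter.Tendsto (fun b => G b * H c) (nhds 0) (nhds 0) := fun c => by
    have : Filter.Tendsto (fun b => G b * H c) (nhds 0) (nhds (G 0 * H c)) := hG.tendsto.mul_const _
    rwa [hG0] at this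
  have hFlim : ∀ a, Filter.Tendsto (fun b => E a * F b) (nhds 0) (nhds 0) := fun a => by
    have : Filter.Tendsto (fun b => E a * F b) (nhds 0) (nhds (E a * F 0)) := hF.tendsto.const_mul _
    rwa [hF0] at this
  have h2 : ∀ c, Continuous fun b => G b * H c := by
    intro c
    refine aux_lin_cont _ (fun x y => ?_) (hGlim c)
    have e : ∀ b, G b * H c = D₁ (b * c) - E b * F c := fun b => by rw [hid]; abel
    rw [e, e, e, add_mul, hD₁.map_add, hE.map_add, add_mul]; abel
  have hEF : ∀ a, Continuous fun c => E a * F c := by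
    intro a
    refine aux_lin_cont _ (fun x y => ?_) (hFlim a)
    have e : ∀ b, E a * F b = D₁ (a * b) - G a * H b := fun b => by rw [hid]; abel
    rw [e, e, e, mul_add, hD₁.map_add, hH.map_add, mul_add]; abel
  obtain ⟨a, ha⟩ := hGsurj 1
  obtain ⟨b0, hb0⟩ := hFsurj 1
  have h1 : ∀ b, Continuous fun c => H (b * c) - G b * H c := by
    intro b
    refine ((hEF (a * b)).sub ((hEF a).comp (continuous_const_mul b))).congr (fun c => ?_)
    have e1 := hid (a * b) c
    have e2 := hid a (b * c)
    have e3 := hyp a b c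
    rw [ha, one_mul, sub_mul, sub_eq_zero] at e3
    rw [ha, one_mul, ← mul_assoc, e1, e3] at e2
    change E (a * b) * F c - E a * F (b * c) = H (b * c) - G b * H c
    rw [sub_eq_sub_iff_add_eq_add, e2]; abel
  have hHc : Continuous H := aux_core hH.mk' G h1 h2
  have hDc : Continuous D₁ := by
    refine ((hEF 1).add (continuous_const.mul hHc : Continuous fun c => G 1 * H c)).congr (fun c => ?_)
    have := hid 1 c
    rw [one_mul] at this
    exact this.symm
  refine ⟨hDc, ?_, hHc⟩
  refine ((hDc.comp (continuous_mul_const b0)).sub (h2 b0)).congr (fun c => ?_)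
  change D₁ (c * b0) - G c * H b0 = E c
  rw [hid, hb0]; simp

end aux5


/-- for an `(E, F, G, H)`-derivation `D₁` on a C*-algebra `A` with `E, H`
linear, `F, G` surjective and continuous at zero, satisfying one of the two annihilation
conditions, the maps `D₁`, `E` and `H` are continuous. -/
theorem stmt15 {A : Type*} [NormedRing A] [StarRing A] [CStarRing A] [CompleteSpace A]
    [NormedAlgebra ℂ A] [StarModule ℂ A]
    (D₁ E H F G : A → A)
    (hD₁ : IsLinearMap ℂ D₁) (hE : IsLinearMap ℂ E) (hH : IsLinearMap ℂ H)
    (hFsurj : Function.Surjective F) (hGsurj : Function.Surjective G)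
    (hF : ContinuousAt F 0) (hG : ContinuousAt G 0)
    (hid : ∀ a b : A, D₁ (a * b) = E a * F b + G a * H b)
    (hyp : (∀ a b c : A, (G (a * b) - G a * G b) * H c = 0) ∨
      (∀ a b c : A, E c * (F (a * b) - F a * F b) = 0)) :
    Continuous D₁ ∧ Continuous E ∧ Continuous H := by
  letI : CStarAlgebra A := {}
  rcases hyp with hyp | hyp
  · exact aux_case D₁ E H F G hD₁ hE hH hFsurj hGsurj hF hG hid hyp
  · have hlin : ∀ T : A → A, IsLinearMap ℂ T → IsLinearMap ℂ fun x => star (T (star x)) := by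
      intro T hT
      refine ⟨fun x y => ?_, fun c x => ?_⟩
      · rw [star_add, hT.map_add, star_add]
      · rw [star_smul, hT.map_smul, star_smul, star_star]
    have hsurj : ∀ T : A → A, Function.Surjective T →
        Function.Surjective fun x => star (T (star x)) := by
      intro T hT y
      obtain ⟨x, hx⟩ := hT (star y)
      exact ⟨star x, by simp [hx]⟩
    have hcont : ∀ T : A → A, ContinuousAt T 0 → ContinuousAt (fun x => star (T (star x))) 0 := by
      intro T hT
      have h0 : ContinuousAt (fun x : A => T (star x)) 0 :=
        ContinuousAt.comp (g := T) (f := fun x : A => star x) (by simpa using hT)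
          continuous_star.continuousAt
      exact continuous_star.continuousAt.comp h0
    have hback : ∀ T : A → A, Continuous (fun x => star (T (star x))) → Continuous T := by
      intro T hT
      refine (continuous_star.comp (hT.comp continuous_star)).congr (fun x => ?_)
      simp
    have := aux_case (fun x => star (D₁ (star x))) (fun x => star (H (star x)))
      (fun x => star (E (star x))) (fun x => star (G (star x))) (fun x => star (F (star x)))
      (hlin _ hD₁) (hlin _ hH) (hlin _ hE) (hsurj _ hGsurj) (hsurj _ hFsurj) (hcont _ hG)
      (hcont _ hF) (fun a b => by
        simp only [star_mul]
        rw [hid, star_add, star_mul, star_mul, add_comm])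
      (fun a b c => by
        have h := congrArg star (hyp (star b) (star a) (star c))
        simpa using h)
    exact ⟨hback _ this.1, hback _ this.2.2, hback _ this.2.1⟩
end
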